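/- arXiv:1512.03687 — 5 statements merged into one kernel-verified Lean document; each statement's English description precedes it below -/
import Mathlib

section
/- Let A and B be nondegenerate SVNR-sets of dimension p on X = {x_1, …, x_n}. Then the Jaccard similarity measure satisfies: (1) 0 ≤ (A,B)_J ≤ 1; (2) (A,B)_J = (B,A)_J; (3) if t_A^i(x_j) = t_B^i(x_j), i_A^i(x_j) = i_B^i(x_j) and f_A^i(x_j) = f_B^i(x_j) for every j ∈ {1,…,n} and i ∈ {1,…,p}, then (A,B)_J = 1. -/
open Finset

noncomputable def jaccardSVNR (n p : ℕ)
    (tA iA fA tB iB fB : Fin p → Fin n → ℝ) : ℝ :=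
  (1 / ((n : ℝ) * (p : ℝ))) * ∑ j : Fin n, ∑ i : Fin p,
    (tA i j * tB i j + iA i j * iB i j + fA i j * fB i j) /
      ((tA i j ^ 2 + iA i j ^ 2 + fA i j ^ 2) + (tB i j ^ 2 + iB i j ^ 2 + fB i j ^ 2)
        - (tA i j * tB i j + iA i j * iB i j + fA i j * fB i j))

/-- If two real triples do not both vanish, the denominator of their Jaccard quotient is positive. -/
theorem jaccard_denom_pos {a b c x y z : ℝ}
    (h : ¬((a = 0 ∧ b = 0 ∧ c = 0) ∧ (x = 0 ∧ y = 0 ∧ z = 0))) :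
    0 < (a ^ 2 + b ^ 2 + c ^ 2) + (x ^ 2 + y ^ 2 + z ^ 2) - (a * x + b * y + c * z) := by
  by_contra! hle
  have sq_add_sq_nonpos : a ^ 2 + b ^ 2 + c ^ 2 + x ^ 2 + y ^ 2 + z ^ 2 ≤ 0 := by
    nlinarith [sq_nonneg (a - x), sq_nonneg (b - y), sq_nonneg (c - z)]
  refine h ⟨⟨?_, ?_, ?_⟩, ?_, ?_, ?_⟩ <;> refine pow_eq_zero_iff two_ne_zero |>.mp ?_ <;>
    linarith [sq_nonneg a, sq_nonneg b, sq_nonneg c, sq_nonneg x, sq_nonneg y, sq_nonneg z]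

theorem jaccard_quotient_le_one (a b c x y z : ℝ) :
    (a * x + b * y + c * z) /
      ((a ^ 2 + b ^ 2 + c ^ 2) + (x ^ 2 + y ^ 2 + z ^ 2) - (a * x + b * y + c * z)) ≤ 1 := by
  apply div_le_one_of_le₀ <;>
    nlinarith [sq_nonneg (a - x), sq_nonneg (b - y), sq_nonneg (c - z),
      sq_nonneg (a + x), sq_nonneg (b + y), sq_nonneg (c + z)]

theorem jaccardSVNR_comm (n p : ℕ) (tA iA fA tB iB fB : Fin p → Fin n → ℝ) :
    jaccardSVNR n p tA iA fA tB iB fB = jaccardSVNR n p tB iB fB tA iA fA := by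
  unfold jaccardSVNR
  congr 1
  refine sum_congr rfl fun j _ => sum_congr rfl fun i _ => ?_
  congr 1 <;> ring

theorem stmt_0
    (n p : ℕ) (hn : 1 ≤ n) (hp : 1 ≤ p)
    (tA iA fA tB iB fB : Fin p → Fin n → ℝ)
    (htA : ∀ i j, tA i j ∈ Set.Icc (0 : ℝ) 1)
    (hiA : ∀ i j, iA i j ∈ Set.Icc (0 : ℝ) 1)
    (hfA : ∀ i j, fA i j ∈ Set.Icc (0 : ℝ) 1)
    (htB : ∀ i j, tB i j ∈ Set.Icc (0 : ℝ) 1)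
    (hiB : ∀ i j, iB i j ∈ Set.Icc (0 : ℝ) 1)
    (hfB : ∀ i j, fB i j ∈ Set.Icc (0 : ℝ) 1)
    (hnd : ∀ i j, ¬((tA i j = 0 ∧ iA i j = 0 ∧ fA i j = 0) ∧
                      (tB i j = 0 ∧ iB i j = 0 ∧ fB i j = 0))) :
    (0 ≤ jaccardSVNR n p tA iA fA tB iB fB ∧ jaccardSVNR n p tA iA fA tB iB fB ≤ 1) ∧
    jaccardSVNR n p tA iA fA tB iB fB = jaccardSVNR n p tB iB fB tA iA fA ∧
    ((∀ i j, tA i j = tB i j ∧ iA i j = iB i j ∧ fA i j = fB i j) →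
      jaccardSVNR n p tA iA fA tB iB fB = 1) := by
  have hnp : (0 : ℝ) < n * p := by
    have : 0 < n * p := Nat.mul_pos hn hp
    exact_mod_cast this
  have sum_one : ∑ _j : Fin n, ∑ _i : Fin p, (1 : ℝ) = n * p := by simp
  refine ⟨⟨?_, ?_⟩, jaccardSVNR_comm .., fun h => ?_⟩
  · refine mul_nonneg (by positivity) (sum_nonneg fun j _ => sum_nonneg fun i _ => ?_)
    have htA := (htA i j).1
    have hiA := (hiA i j).1
    have hfA := (hfA i j).1
    have htB := (htB i j).1
    have hiB := (hiB i j).1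
    have hfB := (hfB i j).1
    exact div_nonneg (by positivity) (jaccard_denom_pos (hnd i j)).le
  · rw [jaccardSVNR, one_div_mul_eq_div, div_le_one hnp, ← sum_one]
    exact sum_le_sum fun j _ => sum_le_sum fun i _ => jaccard_quotient_le_one ..
  · rw [jaccardSVNR, one_div_mul_eq_div, div_eq_one_iff_eq hnp.ne', ← sum_one]
    refine sum_congr rfl fun j _ => sum_congr rfl fun i _ => ?_
    rw [div_eq_one_iff_eq (jaccard_denom_pos (hnd i j)).ne']
    obtain ⟨ht, hi, hf⟩ := h i j
    rw [ht, hi, hf]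
    ring
end

section
/- Let A and B be nondegenerate SVNR-sets of dimension p on X = {x_1, …, x_n}. Then the Dice similarity measure satisfies: (1) 0 ≤ (A,B)_D ≤ 1; (2) (A,B)_D = (B,A)_D; (3) if t_A^i(x_j) = t_B^i(x_j), i_A^i(x_j) = i_B^i(x_j) and f_A^i(x_j) = f_B^i(x_j) for every j ∈ {1,…,n} and i ∈ {1,…,p}, then (A,B)_D = 1. -/
open Finset

noncomputable def diceSVNR (n p : ℕ)
    (tA iA fA tB iB fB : Fin p → Fin n → ℝ) : ℝ :=
  (1 / ((n : ℝ) * (p : ℝ))) * ∑ j : Fin n, ∑ i : Fin p,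
    (2 * (tA i j * tB i j + iA i j * iB i j + fA i j * fB i j)) /
      ((tA i j ^ 2 + iA i j ^ 2 + fA i j ^ 2) + (tB i j ^ 2 + iB i j ^ 2 + fB i j ^ 2))

theorem diceSVNR_comm (n p : ℕ) (tA iA fA tB iB fB : Fin p → Fin n → ℝ) :
    diceSVNR n p tA iA fA tB iB fB = diceSVNR n p tB iB fB tA iA fA := by
  unfold diceSVNR
  congr 1
  refine sum_congr rfl fun j _ => sum_congr rfl fun i _ => ?_
  congr 1 <;> ring

theorem diceSVNR_nonneg {n p : ℕ} {tA iA fA tB iB fB : Fin p → Fin n → ℝ}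
    (htA : ∀ i j, 0 ≤ tA i j) (hiA : ∀ i j, 0 ≤ iA i j) (hfA : ∀ i j, 0 ≤ fA i j)
    (htB : ∀ i j, 0 ≤ tB i j) (hiB : ∀ i j, 0 ≤ iB i j) (hfB : ∀ i j, 0 ≤ fB i j) :
    0 ≤ diceSVNR n p tA iA fA tB iB fB := by
  refine mul_nonneg (by positivity) (sum_nonneg fun j _ => sum_nonneg fun i _ => ?_)
  have := mul_nonneg (htA i j) (htB i j)
  have := mul_nonneg (hiA i j) (hiB i j)
  have := mul_nonneg (hfA i j) (hfB i j)
  positivity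

theorem diceSVNR_le_one (n p : ℕ) (tA iA fA tB iB fB : Fin p → Fin n → ℝ) :
    diceSVNR n p tA iA fA tB iB fB ≤ 1 := by
  unfold diceSVNR
  rw [one_div_mul_eq_div]
  refine div_le_one_of_le₀ ?_ (by positivity)
  calc _ ≤ ∑ _j : Fin n, ∑ _i : Fin p, (1 : ℝ) := by
        refine sum_le_sum fun j _ => sum_le_sum fun i _ => div_le_one_of_le₀ ?_ (by positivity)
        linarith [two_mul_le_add_sq (tA i j) (tB i j), two_mul_le_add_sq (iA i j) (iB i j),
          two_mul_le_add_sq (fA i j) (fB i j)]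
    _ = n * p := by simp

theorem diceSVNR_self {n p : ℕ} (hn : n ≠ 0) (hp : p ≠ 0) {t u f : Fin p → Fin n → ℝ}
    (h : ∀ i j, ¬(t i j = 0 ∧ u i j = 0 ∧ f i j = 0)) :
    diceSVNR n p t u f t u f = 1 := by
  have term_eq_one : ∀ i j, 2 * (t i j * t i j + u i j * u i j + f i j * f i j) /
      ((t i j ^ 2 + u i j ^ 2 + f i j ^ 2) + (t i j ^ 2 + u i j ^ 2 + f i j ^ 2)) = 1 := by
    intro i j
    rw [div_eq_one_iff_eq]
    · ring
    · intro h0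
      refine h i j ⟨?_, ?_, ?_⟩ <;>
        nlinarith [sq_nonneg (t i j), sq_nonneg (u i j), sq_nonneg (f i j)]
  simp [diceSVNR, term_eq_one]
  field_simp

theorem stmt_1
    (n p : ℕ) (hn : 1 ≤ n) (hp : 1 ≤ p)
    (tA iA fA tB iB fB : Fin p → Fin n → ℝ)
    (htA : ∀ i j, tA i j ∈ Set.Icc (0 : ℝ) 1)
    (hiA : ∀ i j, iA i j ∈ Set.Icc (0 : ℝ) 1)
    (hfA : ∀ i j, fA i j ∈ Set.Icc (0 : ℝ) 1)
    (htB : ∀ i j, tB i j ∈ Set.Icc (0 : ℝ) 1)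
    (hiB : ∀ i j, iB i j ∈ Set.Icc (0 : ℝ) 1)
    (hfB : ∀ i j, fB i j ∈ Set.Icc (0 : ℝ) 1)
    (hnd : ∀ i j, ¬((tA i j = 0 ∧ iA i j = 0 ∧ fA i j = 0) ∧
                      (tB i j = 0 ∧ iB i j = 0 ∧ fB i j = 0))) :
    (0 ≤ diceSVNR n p tA iA fA tB iB fB ∧ diceSVNR n p tA iA fA tB iB fB ≤ 1) ∧
    diceSVNR n p tA iA fA tB iB fB = diceSVNR n p tB iB fB tA iA fA ∧
    ((∀ i j, tA i j = tB i j ∧ iA i j = iB i j ∧ fA i j = fB i j) →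
      diceSVNR n p tA iA fA tB iB fB = 1) := by
  refine ⟨⟨diceSVNR_nonneg (fun i j => (htA i j).1) (fun i j => (hiA i j).1)
    (fun i j => (hfA i j).1) (fun i j => (htB i j).1) (fun i j => (hiB i j).1)
    (fun i j => (hfB i j).1), diceSVNR_le_one ..⟩, diceSVNR_comm .., fun h => ?_⟩
  obtain rfl : tA = tB := funext₂ fun i j => (h i j).1
  obtain rfl : iA = iB := funext₂ fun i j => (h i j).2.1
  obtain rfl : fA = fB := funext₂ fun i j => (h i j).2.2
  exact diceSVNR_self (by omega) (by omega) fun i j h0 => hnd i j ⟨h0, h0⟩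
end

section
/- Let A and B be nondegenerate SVNR-sets of dimension p on X = {x_1, …, x_n}, and let w_1, …, w_n be weights with w_j ≥ 0 and Σ_{j=1}^n w_j = 1. Then the weighted Dice similarity measure satisfies: (1) 0 ≤ W(A,B)_D ≤ 1; (2) W(A,B)_D = W(B,A)_D; (3) if t_A^i(x_j) = t_B^i(x_j), i_A^i(x_j) = i_B^i(x_j) and f_A^i(x_j) = f_B^i(x_j) for every j ∈ {1,…,n} and i ∈ {1,…,p}, then W(A,B)_D = 1. -/
open Finset

noncomputable def weightedDiceSVNR (n p : ℕ) (w : Fin n → ℝ)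
    (tA iA fA tB iB fB : Fin p → Fin n → ℝ) : ℝ :=
  ∑ j : Fin n, w j * ((1 / (p : ℝ)) * ∑ i : Fin p,
    (2 * (tA i j * tB i j + iA i j * iB i j + fA i j * fB i j)) /
      ((tA i j ^ 2 + iA i j ^ 2 + fA i j ^ 2) + (tB i j ^ 2 + iB i j ^ 2 + fB i j ^ 2)))

theorem dice_nonneg {a b c x y z : ℝ} (ha : 0 ≤ a) (hb : 0 ≤ b) (hc : 0 ≤ c)
    (hx : 0 ≤ x) (hy : 0 ≤ y) (hz : 0 ≤ z) :
    0 ≤ (2 * (a * x + b * y + c * z)) /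
      ((a ^ 2 + b ^ 2 + c ^ 2) + (x ^ 2 + y ^ 2 + z ^ 2)) := by
  positivity

theorem dice_le_one (a b c x y z : ℝ) :
    (2 * (a * x + b * y + c * z)) /
      ((a ^ 2 + b ^ 2 + c ^ 2) + (x ^ 2 + y ^ 2 + z ^ 2)) ≤ 1 := by
  apply div_le_one_of_le₀ _ (by positivity)
  linarith [sq_nonneg (a - x), sq_nonneg (b - y), sq_nonneg (c - z)]

theorem dice_self {a b c : ℝ} (h : ¬(a = 0 ∧ b = 0 ∧ c = 0)) :
    (2 * (a * a + b * b + c * c)) /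
      ((a ^ 2 + b ^ 2 + c ^ 2) + (a ^ 2 + b ^ 2 + c ^ 2)) = 1 := by
  rw [div_eq_one_iff_eq]
  · ring
  · intro h0
    refine h ⟨?_, ?_, ?_⟩ <;>
      exact pow_eq_zero_iff two_ne_zero |>.1
        (by linarith [sq_nonneg a, sq_nonneg b, sq_nonneg c])

theorem stmt_4
    (n p : ℕ) (hn : 1 ≤ n) (hp : 1 ≤ p)
    (tA iA fA tB iB fB : Fin p → Fin n → ℝ)
    (htA : ∀ i j, tA i j ∈ Set.Icc (0 : ℝ) 1)
    (hiA : ∀ i j, iA i j ∈ Set.Icc (0 : ℝ) 1)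
    (hfA : ∀ i j, fA i j ∈ Set.Icc (0 : ℝ) 1)
    (htB : ∀ i j, tB i j ∈ Set.Icc (0 : ℝ) 1)
    (hiB : ∀ i j, iB i j ∈ Set.Icc (0 : ℝ) 1)
    (hfB : ∀ i j, fB i j ∈ Set.Icc (0 : ℝ) 1)
    (hnd : ∀ i j, ¬((tA i j = 0 ∧ iA i j = 0 ∧ fA i j = 0) ∧
                      (tB i j = 0 ∧ iB i j = 0 ∧ fB i j = 0)))
    (w : Fin n → ℝ) (hw : ∀ j, 0 ≤ w j) (hw1 : ∑ j, w j = 1) :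
    (0 ≤ weightedDiceSVNR n p w tA iA fA tB iB fB ∧ weightedDiceSVNR n p w tA iA fA tB iB fB ≤ 1) ∧
    weightedDiceSVNR n p w tA iA fA tB iB fB = weightedDiceSVNR n p w tB iB fB tA iA fA ∧
    ((∀ i j, tA i j = tB i j ∧ iA i j = iB i j ∧ fA i j = fB i j) →
      weightedDiceSVNR n p w tA iA fA tB iB fB = 1) := by
  have hp0 : (0 : ℝ) < p := by exact_mod_cast hp
  refine ⟨⟨?_, ?_⟩, ?_, ?_⟩
  · refine sum_nonneg fun j _ => mul_nonneg (hw j) (mul_nonneg (by positivity) ?_)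
    exact sum_nonneg fun i _ => dice_nonneg (htA i j).1 (hiA i j).1 (hfA i j).1
      (htB i j).1 (hiB i j).1 (hfB i j).1
  · rw [← hw1]
    refine sum_le_sum fun j _ => mul_le_of_le_one_right (hw j) ?_
    rw [one_div, inv_mul_le_one₀ hp0]
    exact (sum_le_sum fun i _ => dice_le_one _ _ _ _ _ _).trans_eq (by simp)
  · refine sum_congr rfl fun j _ => ?_
    congr 2
    refine sum_congr rfl fun i _ => ?_
    congr 1 <;> ring
  · intro h
    obtain rfl : tA = tB := funext₂ fun i j => (h i j).1
    obtain rfl : iA = iB := funext₂ fun i j => (h i j).2.1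
    obtain rfl : fA = fB := funext₂ fun i j => (h i j).2.2
    rw [← hw1]
    refine sum_congr rfl fun j _ => ?_
    rw [sum_congr rfl fun i _ => dice_self fun h0 => hnd i j ⟨h0, h0⟩]
    simp [hp0.ne']
end

section
/- Let A and B be nondegenerate INR-sets of dimension p on X = {x_1, …, x_n}. Then the Jaccard similarity measure satisfies: (1) 0 ≤ (A,B)_J ≤ 1; (2) (A,B)_J = (B,A)_J; (3) if for every j and i the interval membership values of A and B coincide (t_A^{iL}(x_j) = t_B^{iL}(x_j), t_A^{iU}(x_j) = t_B^{iU}(x_j), i_A^{iL}(x_j) = i_B^{iL}(x_j), i_A^{iU}(x_j) = i_B^{iU}(x_j), f_A^{iL}(x_j) = f_B^{iL}(x_j), f_A^{iU}(x_j) = f_B^{iU}(x_j)), then (A,B)_J = 1. -/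
open Finset

noncomputable def jaccardINR (n p : ℕ)
    (tAL tAU iAL iAU fAL fAU tBL tBU iBL iBU fBL fBU : Fin p → Fin n → ℝ) : ℝ :=
  (1 / ((n : ℝ) * (p : ℝ))) * ∑ j : Fin n, ∑ i : Fin p,
    (tAL i j * tBL i j + tAU i j * tBU i j + iAL i j * iBL i j
        + iAU i j * iBU i j + fAL i j * fBL i j + fAU i j * fBU i j) /
      ((tAL i j ^ 2 + tAU i j ^ 2 + iAL i j ^ 2 + iAU i j ^ 2
        + fAL i j ^ 2 + fAU i j ^ 2)
      + (tBL i j ^ 2 + tBU i j ^ 2 + iBL i j ^ 2 + iBU i j ^ 2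
        + fBL i j ^ 2 + fBU i j ^ 2)
      - (tAL i j * tBL i j + tAU i j * tBU i j + iAL i j * iBL i j
        + iAU i j * iBU i j + fAL i j * fBL i j + fAU i j * fBU i j))

theorem one_div_mul_sum_sum_one {n p : ℕ} (hn : 1 ≤ n) (hp : 1 ≤ p) :
    (1 / ((n : ℝ) * (p : ℝ))) * ∑ _j : Fin n, ∑ _i : Fin p, (1 : ℝ) = 1 := by
  have hn' : (n : ℝ) ≠ 0 := by positivity
  have hp' : (p : ℝ) ≠ 0 := by positivity
  simp only [sum_const, card_univ, Fintype.card_fin, nsmul_eq_mul, mul_one]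
  field_simp

theorem stmt_6
    (n p : ℕ) (hn : 1 ≤ n) (hp : 1 ≤ p)
    (tAL tAU iAL iAU fAL fAU tBL tBU iBL iBU fBL fBU : Fin p → Fin n → ℝ)
    (hAord : ∀ i j, tAL i j ≤ tAU i j ∧ iAL i j ≤ iAU i j ∧ fAL i j ≤ fAU i j)
    (hBord : ∀ i j, tBL i j ≤ tBU i j ∧ iBL i j ≤ iBU i j ∧ fBL i j ≤ fBU i j)
    (hA : ∀ i j, tAL i j ∈ Set.Icc (0 : ℝ) 1 ∧ tAU i j ∈ Set.Icc (0 : ℝ) 1 ∧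
      iAL i j ∈ Set.Icc (0 : ℝ) 1 ∧ iAU i j ∈ Set.Icc (0 : ℝ) 1 ∧
      fAL i j ∈ Set.Icc (0 : ℝ) 1 ∧ fAU i j ∈ Set.Icc (0 : ℝ) 1)
    (hB : ∀ i j, tBL i j ∈ Set.Icc (0 : ℝ) 1 ∧ tBU i j ∈ Set.Icc (0 : ℝ) 1 ∧
      iBL i j ∈ Set.Icc (0 : ℝ) 1 ∧ iBU i j ∈ Set.Icc (0 : ℝ) 1 ∧
      fBL i j ∈ Set.Icc (0 : ℝ) 1 ∧ fBU i j ∈ Set.Icc (0 : ℝ) 1)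
    (hnd : ∀ i j, ¬((tAL i j = 0 ∧ tAU i j = 0 ∧ iAL i j = 0 ∧ iAU i j = 0 ∧
                       fAL i j = 0 ∧ fAU i j = 0) ∧
                     (tBL i j = 0 ∧ tBU i j = 0 ∧ iBL i j = 0 ∧ iBU i j = 0 ∧
                       fBL i j = 0 ∧ fBU i j = 0))) :
    (0 ≤ jaccardINR n p tAL tAU iAL iAU fAL fAU tBL tBU iBL iBU fBL fBU ∧
      jaccardINR n p tAL tAU iAL iAU fAL fAU tBL tBU iBL iBU fBL fBU ≤ 1) ∧
    jaccardINR n p tAL tAU iAL iAU fAL fAU tBL tBU iBL iBU fBL fBU =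
      jaccardINR n p tBL tBU iBL iBU fBL fBU tAL tAU iAL iAU fAL fAU ∧
    ((∀ i j, tAL i j = tBL i j ∧ tAU i j = tBU i j ∧ iAL i j = iBL i j ∧
        iAU i j = iBU i j ∧ fAL i j = fBL i j ∧ fAU i j = fBU i j) →
      jaccardINR n p tAL tAU iAL iAU fAL fAU tBL tBU iBL iBU fBL fBU = 1) := by
  refine ⟨⟨?_, ?_⟩, ?_, fun h => ?_⟩
  · refine mul_nonneg (by positivity) (sum_nonneg fun j _ => sum_nonneg fun i _ => ?_)
    obtain ⟨⟨a1, -⟩, ⟨a2, -⟩, ⟨a3, -⟩, ⟨a4, -⟩, ⟨a5, -⟩, ⟨a6, -⟩⟩ := hA i j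
    obtain ⟨⟨b1, -⟩, ⟨b2, -⟩, ⟨b3, -⟩, ⟨b4, -⟩, ⟨b5, -⟩, ⟨b6, -⟩⟩ := hB i j
    refine div_nonneg (by positivity) ?_
    nlinarith only [two_mul_le_add_sq (tAL i j) (tBL i j), two_mul_le_add_sq (tAU i j) (tBU i j),
      two_mul_le_add_sq (iAL i j) (iBL i j), two_mul_le_add_sq (iAU i j) (iBU i j),
      two_mul_le_add_sq (fAL i j) (fBL i j), two_mul_le_add_sq (fAU i j) (fBU i j),
      mul_nonneg a1 b1, mul_nonneg a2 b2, mul_nonneg a3 b3, mul_nonneg a4 b4,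
      mul_nonneg a5 b5, mul_nonneg a6 b6]
  · rw [← one_div_mul_sum_sum_one hn hp]
    refine mul_le_mul_of_nonneg_left (sum_le_sum fun j _ => sum_le_sum fun i _ => ?_)
      (by positivity)
    obtain ⟨⟨a1, -⟩, ⟨a2, -⟩, ⟨a3, -⟩, ⟨a4, -⟩, ⟨a5, -⟩, ⟨a6, -⟩⟩ := hA i j
    obtain ⟨⟨b1, -⟩, ⟨b2, -⟩, ⟨b3, -⟩, ⟨b4, -⟩, ⟨b5, -⟩, ⟨b6, -⟩⟩ := hB i j
    have hN : 0 ≤ tAL i j * tBL i j + tAU i j * tBU i j + iAL i j * iBL i j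
        + iAU i j * iBU i j + fAL i j * fBL i j + fAU i j * fBU i j := by positivity
    have hle : tAL i j * tBL i j + tAU i j * tBU i j + iAL i j * iBL i j
          + iAU i j * iBU i j + fAL i j * fBL i j + fAU i j * fBU i j ≤
        (tAL i j ^ 2 + tAU i j ^ 2 + iAL i j ^ 2 + iAU i j ^ 2 + fAL i j ^ 2 + fAU i j ^ 2)
        + (tBL i j ^ 2 + tBU i j ^ 2 + iBL i j ^ 2 + iBU i j ^ 2 + fBL i j ^ 2 + fBU i j ^ 2)
        - (tAL i j * tBL i j + tAU i j * tBU i j + iAL i j * iBL i j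
          + iAU i j * iBU i j + fAL i j * fBL i j + fAU i j * fBU i j) := by
      linarith only [two_mul_le_add_sq (tAL i j) (tBL i j), two_mul_le_add_sq (tAU i j) (tBU i j),
        two_mul_le_add_sq (iAL i j) (iBL i j), two_mul_le_add_sq (iAU i j) (iBU i j),
        two_mul_le_add_sq (fAL i j) (fBL i j), two_mul_le_add_sq (fAU i j) (fBU i j)]
    exact div_le_one_of_le₀ hle (hN.trans hle)
  · unfold jaccardINR
    congr 1
    refine sum_congr rfl fun j _ => sum_congr rfl fun i _ => ?_
    congr 1 <;> ring
  · rw [← one_div_mul_sum_sum_one hn hp]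
    unfold jaccardINR
    congr 1
    refine sum_congr rfl fun j _ => sum_congr rfl fun i _ => ?_
    obtain ⟨h1, h2, h3, h4, h5, h6⟩ := h i j
    have hS : tBL i j * tBL i j + tBU i j * tBU i j + iBL i j * iBL i j
        + iBU i j * iBU i j + fBL i j * fBL i j + fBU i j * fBU i j ≠ 0 := by
      intro h0
      have hzero : tBL i j = 0 ∧ tBU i j = 0 ∧ iBL i j = 0 ∧ iBU i j = 0 ∧
          fBL i j = 0 ∧ fBU i j = 0 := by
        refine ⟨?_, ?_, ?_, ?_, ?_, ?_⟩ <;> refine mul_self_eq_zero.mp ?_ <;>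
        linarith only [h0, mul_self_nonneg (tBL i j), mul_self_nonneg (tBU i j),
          mul_self_nonneg (iBL i j), mul_self_nonneg (iBU i j),
          mul_self_nonneg (fBL i j), mul_self_nonneg (fBU i j)]
      refine hnd i j ⟨?_, hzero⟩
      rwa [h1, h2, h3, h4, h5, h6]
    rw [h1, h2, h3, h4, h5, h6]
    convert div_self hS using 2
    ring
end

section
/- Let A and B be nondegenerate INR-sets of dimension p on X = {x_1, …, x_n}, and let w_1, …, w_n be weights with w_j ≥ 0 and Σ_{j=1}^n w_j = 1. Then the weighted Dice similarity measure satisfies: (1) 0 ≤ W(A,B)_D ≤ 1; (2) W(A,B)_D = W(B,A)_D; (3) if for every j and i the interval membership values of A and B coincide, then W(A,B)_D = 1. -/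
open Finset

noncomputable def weightedDiceINR (n p : ℕ) (w : Fin n → ℝ)
    (tAL tAU iAL iAU fAL fAU tBL tBU iBL iBU fBL fBU : Fin p → Fin n → ℝ) : ℝ :=
  ∑ j : Fin n, w j * ((1 / (p : ℝ)) * ∑ i : Fin p,
    (2 * (tAL i j * tBL i j + tAU i j * tBU i j + iAL i j * iBL i j
        + iAU i j * iBU i j + fAL i j * fBL i j + fAU i j * fBU i j)) /
      ((tAL i j ^ 2 + tAU i j ^ 2 + iAL i j ^ 2 + iAU i j ^ 2
        + fAL i j ^ 2 + fAU i j ^ 2)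
      + (tBL i j ^ 2 + tBU i j ^ 2 + iBL i j ^ 2 + iBU i j ^ 2
        + fBL i j ^ 2 + fBU i j ^ 2)))

lemma weighted_average_one {n p : ℕ} (hp : 1 ≤ p) {w : Fin n → ℝ} (hw1 : ∑ j, w j = 1) :
    ∑ j : Fin n, w j * ((1 / (p : ℝ)) * ∑ _i : Fin p, (1 : ℝ)) = 1 := by
  have hp0 : (p : ℝ) ≠ 0 := by positivity
  simp [hp0, hw1]

theorem stmt_10
    (n p : ℕ) (hn : 1 ≤ n) (hp : 1 ≤ p)
    (tAL tAU iAL iAU fAL fAU tBL tBU iBL iBU fBL fBU : Fin p → Fin n → ℝ)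
    (hAord : ∀ i j, tAL i j ≤ tAU i j ∧ iAL i j ≤ iAU i j ∧ fAL i j ≤ fAU i j)
    (hBord : ∀ i j, tBL i j ≤ tBU i j ∧ iBL i j ≤ iBU i j ∧ fBL i j ≤ fBU i j)
    (hA : ∀ i j, tAL i j ∈ Set.Icc (0 : ℝ) 1 ∧ tAU i j ∈ Set.Icc (0 : ℝ) 1 ∧
      iAL i j ∈ Set.Icc (0 : ℝ) 1 ∧ iAU i j ∈ Set.Icc (0 : ℝ) 1 ∧
      fAL i j ∈ Set.Icc (0 : ℝ) 1 ∧ fAU i j ∈ Set.Icc (0 : ℝ) 1)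
    (hB : ∀ i j, tBL i j ∈ Set.Icc (0 : ℝ) 1 ∧ tBU i j ∈ Set.Icc (0 : ℝ) 1 ∧
      iBL i j ∈ Set.Icc (0 : ℝ) 1 ∧ iBU i j ∈ Set.Icc (0 : ℝ) 1 ∧
      fBL i j ∈ Set.Icc (0 : ℝ) 1 ∧ fBU i j ∈ Set.Icc (0 : ℝ) 1)
    (hnd : ∀ i j, ¬((tAL i j = 0 ∧ tAU i j = 0 ∧ iAL i j = 0 ∧ iAU i j = 0 ∧
                       fAL i j = 0 ∧ fAU i j = 0) ∧
                     (tBL i j = 0 ∧ tBU i j = 0 ∧ iBL i j = 0 ∧ iBU i j = 0 ∧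
                       fBL i j = 0 ∧ fBU i j = 0)))
    (w : Fin n → ℝ) (hw : ∀ j, 0 ≤ w j) (hw1 : ∑ j, w j = 1) :
    (0 ≤ weightedDiceINR n p w tAL tAU iAL iAU fAL fAU tBL tBU iBL iBU fBL fBU ∧
      weightedDiceINR n p w tAL tAU iAL iAU fAL fAU tBL tBU iBL iBU fBL fBU ≤ 1) ∧
    weightedDiceINR n p w tAL tAU iAL iAU fAL fAU tBL tBU iBL iBU fBL fBU =
      weightedDiceINR n p w tBL tBU iBL iBU fBL fBU tAL tAU iAL iAU fAL fAU ∧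
    ((∀ i j, tAL i j = tBL i j ∧ tAU i j = tBU i j ∧ iAL i j = iBL i j ∧
        iAU i j = iBU i j ∧ fAL i j = fBL i j ∧ fAU i j = fBU i j) →
      weightedDiceINR n p w tAL tAU iAL iAU fAL fAU tBL tBU iBL iBU fBL fBU = 1) := by
  unfold weightedDiceINR
  refine ⟨⟨?_, ?_⟩, ?_, ?_⟩
  · refine sum_nonneg fun j _ => mul_nonneg (hw j) (mul_nonneg (by positivity)
      (sum_nonneg fun i _ => ?_))
    obtain ⟨⟨_, _⟩, ⟨_, _⟩, ⟨_, _⟩, ⟨_, _⟩, ⟨_, _⟩, ⟨_, _⟩⟩ := hA i j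
    obtain ⟨⟨_, _⟩, ⟨_, _⟩, ⟨_, _⟩, ⟨_, _⟩, ⟨_, _⟩, ⟨_, _⟩⟩ := hB i j
    positivity
  · refine le_of_le_of_eq ?_ (weighted_average_one hp hw1)
    refine sum_le_sum fun j _ => mul_le_mul_of_nonneg_left (mul_le_mul_of_nonneg_left
      (sum_le_sum fun i _ => ?_) (by positivity)) (hw j)
    refine div_le_one_of_le₀ ?_ (by positivity)
    linarith [two_mul_le_add_sq (tAL i j) (tBL i j), two_mul_le_add_sq (tAU i j) (tBU i j),
      two_mul_le_add_sq (iAL i j) (iBL i j), two_mul_le_add_sq (iAU i j) (iBU i j),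
      two_mul_le_add_sq (fAL i j) (fBL i j), two_mul_le_add_sq (fAU i j) (fBU i j)]
  · refine sum_congr rfl fun j _ => ?_
    congr 2
    refine sum_congr rfl fun i _ => ?_
    congr 1 <;> ring
  · intro h
    refine Eq.trans ?_ (weighted_average_one hp hw1)
    refine sum_congr rfl fun j _ => ?_
    congr 2
    refine sum_congr rfl fun i _ => ?_
    have hne := hnd i j
    obtain ⟨h₁, h₂, h₃, h₄, h₅, h₆⟩ := h i j
    rw [h₁, h₂, h₃, h₄, h₅, h₆, and_self] at hne
    rw [h₁, h₂, h₃, h₄, h₅, h₆, div_eq_one_iff_eq]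
    · ring
    · contrapose! hne
      refine ⟨?_, ?_, ?_, ?_, ?_, ?_⟩ <;> refine pow_eq_zero_iff two_ne_zero |>.mp ?_ <;>
        linarith [sq_nonneg (tBL i j), sq_nonneg (tBU i j), sq_nonneg (iBL i j),
          sq_nonneg (iBU i j), sq_nonneg (fBL i j), sq_nonneg (fBU i j)]
end
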